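/- If Δ ⊢ U : s for a sort s, γ is a well-typed substitution from Δ to Γ (i.e., Γ ⊢ xγ : Tγ for all (x:T) ∈ Δ), and Uγσ ∈ 𝒟, then ⟦Uγ⟧σ = ⟦U⟧_{γσ} (the interpretation commutes with well-typed substitution). -/

import Mathlib

set_option maxHeartbeats 1000000

/-! # Terms of λΠ/R (de Bruijn representation) -/

inductive Trm (F : Type) : Type
  | type : Trm F
  | kind : Trm F
  | var : ℕ → Trm F
  | sym : F → Trm F
  | pi : Trm F → Trm F → Trm F
  | app : Trm F → Trm F → Trm F
  | lam : Trm F → Trm F → Trm F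

namespace Trm

variable {F : Type}

/-- Lifting of a renaming under a binder. -/
def upRen (ρ : ℕ → ℕ) : ℕ → ℕ
  | 0 => 0
  | n + 1 => ρ n + 1

/-- Renaming of (de Bruijn) variables. -/
def rename (ρ : ℕ → ℕ) : Trm F → Trm F
  | .type => .type
  | .kind => .kind
  | .var n => .var (ρ n)
  | .sym f => .sym f
  | .pi A B => .pi (rename ρ A) (rename (upRen ρ) B)
  | .app t u => .app (rename ρ t) (rename ρ u)
  | .lam A b => .lam (rename ρ A) (rename (upRen ρ) b)

/-- Lifting of a substitution under a binder. -/
def up (σ : ℕ → Trm F) : ℕ → Trm F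
  | 0 => .var 0
  | n + 1 => rename Nat.succ (σ n)

/-- Capture-avoiding (parallel) substitution. -/
def subst (σ : ℕ → Trm F) : Trm F → Trm F
  | .type => .type
  | .kind => .kind
  | .var n => σ n
  | .sym f => .sym f
  | .pi A B => .pi (subst σ A) (subst (up σ) B)
  | .app t u => .app (subst σ t) (subst σ u)
  | .lam A b => .lam (subst σ A) (subst (up σ) b)

/-- Cons of a term on a substitution: `scons a σ` maps `0` to `a` and `n+1` to `σ n`. -/
def scons (a : Trm F) (σ : ℕ → Trm F) : ℕ → Trm F
  | 0 => a
  | n + 1 => σ n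

/-- Substitution of the first free variable: `t[x ↦ a]`. -/
def subst1 (a t : Trm F) : Trm F := subst (scons a .var) t

/-- Shifting of all free variables. -/
def shift : Trm F → Trm F := rename Nat.succ

/-- Application of a head term to a list of arguments: `appList h [t1,…,tn] = h t1 … tn`. -/
def appList (h : Trm F) : List (Trm F) → Trm F
  | [] => h
  | a :: as => appList (.app h a) as

/-- Free (de Bruijn) variables of a term. -/
def FV : Trm F → Set ℕ
  | .type => ∅
  | .kind => ∅
  | .var n => {n}
  | .sym _ => ∅
  | .pi A B => FV A ∪ {n | n + 1 ∈ FV B}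
  | .app t u => FV t ∪ FV u
  | .lam A b => FV A ∪ {n | n + 1 ∈ FV b}

/-- The class 𝕂 of kinds: `K = TYPE | Πx:t.K`. -/
def IsKind : Trm F → Prop
  | .type => True
  | .pi _ B => IsKind B
  | _ => False

/-- Sorts: `TYPE` and `KIND`. -/
def IsSort (s : Trm F) : Prop := s = .type ∨ s = .kind

/-- The product arity of a term: the number of leading products. -/
def piArity : Trm F → ℕ
  | .pi _ B => piArity B + 1
  | _ => 0

/-- Strip `n` leading products. -/
def piCodN : ℕ → Trm F → Trm F
  | 0, T => T
  | n + 1, .pi _ B => piCodN n B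
  | _ + 1, T => T

/-- The first `n` domains of the leading products, as a de Bruijn context
(type of variable `0` first, i.e. innermost first). -/
def teleN : ℕ → Trm F → List (Trm F)
  | 0, _ => []
  | n + 1, .pi A B => teleN n B ++ [A]
  | _ + 1, _ => []

/-- The full telescope of leading products, as a de Bruijn context. -/
def telescope (T : Trm F) : List (Trm F) := teleN (piArity T) T

/-- The domains of the leading products, outermost first. -/
def piDoms : Trm F → List (Trm F)
  | .pi A B => A :: piDoms B
  | _ => []

end Trm

/-- The subterm relation (reflexive and transitive). -/
inductive Subterm {F : Type} : Trm F → Trm F → Prop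
  | refl (t : Trm F) : Subterm t t
  | piL {t A B} : Subterm t A → Subterm t (.pi A B)
  | piR {t A B} : Subterm t B → Subterm t (.pi A B)
  | appL {t u v} : Subterm t u → Subterm t (.app u v)
  | appR {t u v} : Subterm t v → Subterm t (.app u v)
  | lamL {t A b} : Subterm t A → Subterm t (.lam A b)
  | lamR {t A b} : Subterm t b → Subterm t (.lam A b)

/-! # Rewriting -/

/-- A set of rewriting rules `l → r`. -/
abbrev Rules (F : Type) := Set (Trm F × Trm F)

/-- `R` is a rewriting system: for every rule `l → r`, `FV(r) ⊆ FV(l)` and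
`l` is of the form `f l⃗`. -/
def IsRewriteSystem {F : Type} (R : Rules F) : Prop :=
  ∀ p ∈ R, Trm.FV p.2 ⊆ Trm.FV p.1 ∧ ∃ (f : F) (ls : List (Trm F)), p.1 = Trm.appList (.sym f) ls

/-- A symbol is defined if it heads the left-hand side of some rule. -/
def Defined {F : Type} (R : Rules F) (f : F) : Prop :=
  ∃ (ls : List (Trm F)) (r : Trm F), (Trm.appList (.sym f) ls, r) ∈ R

/-- One-step reduction `→ = →β ∪ →R`: β-reduction together with the closure of the
rules of `R` by substitution and context. -/
inductive Red {F : Type} (R : Rules F) : Trm F → Trm F → Prop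
  | beta (A b a : Trm F) : Red R (.app (.lam A b) a) (Trm.subst1 a b)
  | rule {l r : Trm F} (σ : ℕ → Trm F) : (l, r) ∈ R → Red R (Trm.subst σ l) (Trm.subst σ r)
  | appL {t t' u} : Red R t t' → Red R (.app t u) (.app t' u)
  | appR {t u u'} : Red R u u' → Red R (.app t u) (.app t u')
  | piL {A A' B} : Red R A A' → Red R (.pi A B) (.pi A' B)
  | piR {A B B'} : Red R B B' → Red R (.pi A B) (.pi A B')
  | lamL {A A' b} : Red R A A' → Red R (.lam A b) (.lam A' b)
  | lamR {A b b'} : Red R b b' → Red R (.lam A b) (.lam A b')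

/-- Multi-step reduction `→*`. -/
def RedStar {F : Type} (R : Rules F) : Trm F → Trm F → Prop := Relation.ReflTransGen (Red R)

/-- Joinability `↓`. -/
def Joinable {F : Type} (R : Rules F) (t u : Trm F) : Prop :=
  ∃ v, RedStar R t v ∧ RedStar R u v

/-- Local confluence: `← · → ⊆ →* · *←`. -/
def LocallyConfluent {F : Type} (R : Rules F) : Prop :=
  ∀ t u v, Red R t u → Red R t v → Joinable R u v

/-- `t` is strongly normalizing (terminating): no infinite reduction sequence from `t`. -/
def SN {F : Type} (R : Rules F) (t : Trm F) : Prop := Acc (fun a b => Red R b a) t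

/-- The set of strongly normalizing terms. -/
def SNset {F : Type} (R : Rules F) : Set (Trm F) := {t | SN R t}

/-- `t` is in normal form. -/
def NormalForm {F : Type} (R : Rules F) (t : Trm F) : Prop := ∀ u, ¬ Red R t u

/-- Neutral terms: `(λx:A.t)u v⃗`, `x v⃗`, or `f v⃗` where every rule `f l⃗ → r ∈ R`
satisfies `|l⃗| ≤ |v⃗|`. -/
def Neutral {F : Type} (R : Rules F) (t : Trm F) : Prop :=
  (∃ (A b a : Trm F) (vs : List (Trm F)), t = Trm.appList (.app (.lam A b) a) vs) ∨
  (∃ (x : ℕ) (vs : List (Trm F)), t = Trm.appList (.var x) vs) ∨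
  (∃ (f : F) (vs : List (Trm F)), t = Trm.appList (.sym f) vs ∧
    ∀ (ls : List (Trm F)) (r : Trm F), (Trm.appList (.sym f) ls, r) ∈ R → ls.length ≤ vs.length)

/-- Computability predicates: `S ⊆ SN`, `S` is closed under reduction, and `S` contains
every neutral term all of whose one-step reducts are in `S`. -/
def IsCompPred {F : Type} (R : Rules F) (S : Set (Trm F)) : Prop :=
  S ⊆ SNset R ∧ (∀ t ∈ S, ∀ u, Red R t u → u ∈ S) ∧
  (∀ t, Neutral R t → (∀ u, Red R t u → u ∈ S) → t ∈ S)

/-! # Typing: λP extended with function symbols and conversion modulo `→` -/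

/-- The typing rules of λΠ/R: the rules of λP (in de Bruijn presentation) with the extra
rule (fun) `⊢ f : Θ_f` and conversion up to joinability for `→`. -/
inductive Typing {F : Type} (R : Rules F) (Θ sΘ : F → Trm F) :
    List (Trm F) → Trm F → Trm F → Prop
  | ax : Typing R Θ sΘ [] .type .kind
  | var {Γ A s} : Trm.IsSort s → Typing R Θ sΘ Γ A s →
      Typing R Θ sΘ (A :: Γ) (.var 0) (Trm.shift A)
  | weak {Γ A s b B} : Trm.IsSort s → Typing R Θ sΘ Γ A s → Typing R Θ sΘ Γ b B →
      Typing R Θ sΘ (A :: Γ) (Trm.shift b) (Trm.shift B)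
  | prod {Γ A B s} : Trm.IsSort s → Typing R Θ sΘ Γ A .type → Typing R Θ sΘ (A :: Γ) B s →
      Typing R Θ sΘ Γ (.pi A B) s
  | abs {Γ A b B s} : Trm.IsSort s → Typing R Θ sΘ (A :: Γ) b B →
      Typing R Θ sΘ Γ (.pi A B) s → Typing R Θ sΘ Γ (.lam A b) (.pi A B)
  | app {Γ t a A B} : Typing R Θ sΘ Γ t (.pi A B) → Typing R Θ sΘ Γ a A →
      Typing R Θ sΘ Γ (.app t a) (Trm.subst1 a B)
  | conv {Γ a A B s} : Typing R Θ sΘ Γ a A → Joinable R A B → Typing R Θ sΘ Γ B s →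
      Trm.IsSort s → Typing R Θ sΘ Γ a B
  | symb (f : F) : Trm.IsSort (sΘ f) → Typing R Θ sΘ [] (Θ f) (sΘ f) →
      Typing R Θ sΘ [] (.sym f) (Θ f)

/-- `→` preserves typing (subject reduction). -/
def PresTyping {F : Type} (R : Rules F) (Θ sΘ : F → Trm F) : Prop :=
  ∀ Γ t u T, Typing R Θ sΘ Γ t T → Red R t u → Typing R Θ sΘ Γ u T

/-- A substitution `γ` is well-typed from `Δ` to `Γ` (for a generic typing judgment `Ty`):
for all `(x : T) ∈ Δ`, `Ty Γ (xγ) (Tγ)`. -/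
def SubstTyped {F : Type} (Ty : List (Trm F) → Trm F → Trm F → Prop)
    (Γ : List (Trm F)) (γ : ℕ → Trm F) (Δ : List (Trm F)) : Prop :=
  ∀ i A, Δ[i]? = some A → Ty Γ (γ i) (Trm.subst (fun j => γ (j + i + 1)) A)

/-! # Interpretation of types as computability predicates -/

/-- `𝕀`: partial functions from terms to sets of terms. -/
abbrev Interp (F : Type) := Trm F → Part (Set (Trm F))

/-- Graph inclusion of partial functions. -/
def InterpLE {F : Type} (I J : Interp F) : Prop := ∀ T S, S ∈ I T → S ∈ J T

/-- `I` is the least fixpoint of `φ` on `𝕀` (ordered by graph inclusion). -/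
def IsLfpInterp {F : Type} (φ : Interp F → Interp F) (I : Interp F) : Prop :=
  φ I = I ∧ ∀ J, φ J = J → InterpLE I J

/-- The domain `D(I)`: terminating terms `T` such that whenever `T →* Πx:A.B`,
`A ∈ dom(I)` and `B[x↦a] ∈ dom(I)` for all `a ∈ I(A)`. -/
def domD {F : Type} (R : Rules F) (I : Interp F) : Set (Trm F) :=
  {T | SN R T ∧ ∀ A B, RedStar R T (.pi A B) →
    (I A).Dom ∧ ∀ S ∈ I A, ∀ a ∈ S, (I (Trm.subst1 a B)).Dom}

/-- `{t | ∀ a ∈ I(A), t a ∈ I(B[x↦a])}` (relational reading of the partial function `I`). -/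
def piPart {F : Type} (I : Interp F) (A B : Trm F) : Set (Trm F) :=
  {t | ∀ S ∈ I A, ∀ a ∈ S, ∀ S' ∈ I (Trm.subst1 a B), Trm.app t a ∈ S'}

open Classical in
/-- The monotone function `F : 𝕀 → 𝕀`: `dom(F(I)) = D(I)`; `F(I)(T) = SN` if the normal
form of `T` is not a product; `F(I)(T) = {t | ∀ a ∈ I(A), t a ∈ I(B[x↦a])}` if the normal
form of `T` is `Πx:A.B`. -/
noncomputable def interpF {F : Type} (R : Rules F) (I : Interp F) : Interp F := fun T =>
  ⟨T ∈ domD R I, fun _ =>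
    if h : ∃ A B, RedStar R T (.pi A B) ∧ NormalForm R (.pi A B) then
      piPart I h.choose h.choose_spec.choose
    else SNset R⟩

/-- The value of a partial interpretation at `T` (as a set). -/
def partMem {F : Type} (I : Interp F) (T : Trm F) : Set (Trm F) := {t | ∀ S ∈ I T, t ∈ S}

open Classical in
/-- The interpretation `⟦T⟧σ` of a term `T` wrt a substitution `σ`, relative to the least
fixpoint `I = ℐ` of `interpF`: `⟦s⟧σ = 𝒟` for `s` a sort;
`⟦Πx:A.K⟧σ = {t | ∀ a ∈ ⟦A⟧σ, t a ∈ ⟦K⟧[x↦a,σ]}` for `K` a kind;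
`⟦T⟧σ = ℐ(Tσ)` if `T` is neither a kind nor `KIND` and `Tσ ∈ 𝒟`; `⟦T⟧σ = SN` otherwise. -/
noncomputable def interp {F : Type} (R : Rules F) (I : Interp F) :
    Trm F → (ℕ → Trm F) → Set (Trm F)
  | .type, _ => domD R I
  | .kind, _ => domD R I
  | .pi A B, σ =>
      if Trm.IsKind B then
        {t | ∀ a ∈ interp R I A σ, Trm.app t a ∈ interp R I B (Trm.scons a σ)}
      else if Trm.subst σ (.pi A B) ∈ domD R I then partMem I (Trm.subst σ (.pi A B))
      else SNset R
  | .var n, σ =>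
      if Trm.subst σ (.var n) ∈ domD R I then partMem I (Trm.subst σ (.var n)) else SNset R
  | .sym g, σ =>
      if Trm.subst σ (.sym g) ∈ domD R I then partMem I (Trm.subst σ (.sym g)) else SNset R
  | .app t u, σ =>
      if Trm.subst σ (.app t u) ∈ domD R I then partMem I (Trm.subst σ (.app t u)) else SNset R
  | .lam A b, σ =>
      if Trm.subst σ (.lam A b) ∈ domD R I then partMem I (Trm.subst σ (.lam A b)) else SNset R

/-- `σ ⊨ Γ`: a substitution is adequate wrt an environment. -/
def Models {F : Type} (R : Rules F) (I : Interp F) (σ : ℕ → Trm F) (Γ : List (Trm F)) : Prop :=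
  ∀ i A, Γ[i]? = some A → σ i ∈ interp R I A (fun j => σ (j + i + 1))

/-- The typing map `Θ` is adequate: `f ∈ ⟦Θ_f⟧` whenever `⊢ Θ_f : s_f` and `Θ_f ∈ ⟦s_f⟧`. -/
def Adequate {F : Type} (R : Rules F) (Θ sΘ : F → Trm F) (I : Interp F) : Prop :=
  ∀ f : F, Typing R Θ sΘ [] (Θ f) (sΘ f) → Θ f ∈ interp R I (sΘ f) Trm.var →
    Trm.sym f ∈ interp R I (Θ f) Trm.var

/-- The substitution `[x⃗ ↦ l⃗]` (where `ls` lists the images of variables `0, 1, …`). -/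
def mkSubst {F : Type} (ls : List (Trm F)) : ℕ → Trm F := fun i =>
  (ls[i]?).getD (.var (i - ls.length))

/-- Composition of substitutions: `x ↦ (xγ)σ`. -/
def compSubst {F : Type} (γ σ : ℕ → Trm F) : ℕ → Trm F := fun i => Trm.subst σ (γ i)

/-- The set `ℂ` of terms `f t⃗` with `|t⃗| = arit(Θ_f)`, `⊢ Θ_f : s_f`, `Θ_f ∈ ⟦s_f⟧` and
`[x⃗↦t⃗] ⊨ Γ_f`. -/
def CC {F : Type} (R : Rules F) (Θ sΘ : F → Trm F) (I : Interp F) : Set (Trm F) :=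
  {t | ∃ (f : F) (ts : List (Trm F)), t = Trm.appList (.sym f) ts ∧
    ts.length = Trm.piArity (Θ f) ∧
    Typing R Θ sΘ [] (Θ f) (sΘ f) ∧ Θ f ∈ interp R I (sΘ f) Trm.var ∧
    Models R I (mkSubst ts.reverse) (Trm.telescope (Θ f))}

/-! # Dependency pairs -/

/-- Occurrences of `p` in a term, not at the root, such that `p` is not further applied
(i.e. `p` collects all the arguments of its head at this occurrence). -/
inductive MaxOccNR {F : Type} (p : Trm F) : Trm F → Prop
  | appL {u v} : MaxOccNR p u → MaxOccNR p (.app u v)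
  | appR {u v} : MaxOccNR p v → MaxOccNR p (.app u v)
  | appRroot {u} : MaxOccNR p (.app u p)
  | piL {A B} : MaxOccNR p A → MaxOccNR p (.pi A B)
  | piLroot {B} : MaxOccNR p (.pi p B)
  | piR {A B} : MaxOccNR p B → MaxOccNR p (.pi A B)
  | piRroot {A} : MaxOccNR p (.pi A p)
  | lamL {A b} : MaxOccNR p A → MaxOccNR p (.lam A b)
  | lamLroot {b} : MaxOccNR p (.lam p b)
  | lamR {A b} : MaxOccNR p b → MaxOccNR p (.lam A b)
  | lamRroot {A} : MaxOccNR p (.lam A p)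

/-- `p` occurs in `t` as a maximal application. -/
def MaxOcc {F : Type} (p t : Trm F) : Prop := t = p ∨ MaxOccNR p t

/-- Dependency pairs: `f l⃗ > g m⃗` iff there is a rule `f l⃗ → r ∈ R`, `g` is defined and
`g m⃗` is a subterm of `r` such that `m⃗` are all the arguments to which `g` is applied. -/
def DepPair {F : Type} (R : Rules F) (f : F) (ls : List (Trm F)) (g : F)
    (ms : List (Trm F)) : Prop :=
  Defined R g ∧ ∃ r, (Trm.appList (.sym f) ls, r) ∈ R ∧ MaxOcc (Trm.appList (.sym g) ms) r

/-- `f t⃗ →arg f u⃗`: reduction of exactly one argument. -/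
def ArgRed {F : Type} (R : Rules F) (t u : Trm F) : Prop :=
  ∃ (f : F) (pre post : List (Trm F)) (a b : Trm F), Red R a b ∧
    t = Trm.appList (.sym f) (pre ++ a :: post) ∧ u = Trm.appList (.sym f) (pre ++ b :: post)

/-- `>ₛ`: the closure of the dependency pair relation by substitution and left-application:
`f t₁…t_p >ₛ g u₁…u_q` iff there are a dependency pair `f l₁…l_i > g m₁…m_j` with `i ≤ p`
and `j ≤ q` and a substitution `σ` such that `t_k →* l_kσ` for `k ≤ i` and `m_kσ = u_k`
for `k ≤ j`. -/
def GTsub {F : Type} (R : Rules F) (t u : Trm F) : Prop :=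
  ∃ (f g : F) (ts us ls ms : List (Trm F)) (σ : ℕ → Trm F),
    t = Trm.appList (.sym f) ts ∧ u = Trm.appList (.sym g) us ∧
    DepPair R f ls g ms ∧ ls.length ≤ ts.length ∧ ms.length ≤ us.length ∧
    (∀ (k : ℕ) (tk lk : Trm F), ts[k]? = some tk → ls[k]? = some lk → RedStar R tk (Trm.subst σ lk)) ∧
    (∀ (k : ℕ) (mk : Trm F), ms[k]? = some mk → us[k]? = some (Trm.subst σ mk))

/-- The call relation `≻̃ = →arg* · >ₛ` on `ℂ`. -/
def CallRel {F : Type} (R : Rules F) (Θ sΘ : F → Trm F) (I : Interp F) (t u : Trm F) : Prop :=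
  t ∈ CC R Θ sΘ I ∧ u ∈ CC R Θ sΘ I ∧
    ∃ v, Relation.ReflTransGen (ArgRed R) t v ∧ GTsub R v u

/-! # Precedence and well-structured systems -/

/-- `f ⪰ g` (one step): `g` occurs in `Θ_f` or in the right-hand side of a rule of `f`. -/
def PrecBase {F : Type} (R : Rules F) (Θ : F → Trm F) (f g : F) : Prop :=
  Subterm (.sym g) (Θ f) ∨
  ∃ (ls : List (Trm F)) (r : Trm F), (Trm.appList (.sym f) ls, r) ∈ R ∧ Subterm (.sym g) r

/-- `⪰`: the smallest quasi-order containing `PrecBase`. -/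
def Preceq {F : Type} (R : Rules F) (Θ : F → Trm F) : F → F → Prop :=
  Relation.ReflTransGen (PrecBase R Θ)

/-- `≻`: the strict part of `⪰`. -/
def Prec {F : Type} (R : Rules F) (Θ : F → Trm F) (f g : F) : Prop :=
  Preceq R Θ f g ∧ ¬ Preceq R Θ g f

/-- The restricted type system `⊢_{≺ f}`: as `Typing`, but function symbols may only be
introduced when strictly smaller than `f` in the precedence. -/
inductive LTyp {F : Type} (R : Rules F) (Θ sΘ : F → Trm F) (f : F) :
    List (Trm F) → Trm F → Trm F → Prop
  | ax : LTyp R Θ sΘ f [] .type .kind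
  | var {Γ A s} : Trm.IsSort s → LTyp R Θ sΘ f Γ A s →
      LTyp R Θ sΘ f (A :: Γ) (.var 0) (Trm.shift A)
  | weak {Γ A s b B} : Trm.IsSort s → LTyp R Θ sΘ f Γ A s → LTyp R Θ sΘ f Γ b B →
      LTyp R Θ sΘ f (A :: Γ) (Trm.shift b) (Trm.shift B)
  | prod {Γ A B s} : Trm.IsSort s → LTyp R Θ sΘ f Γ A .type → LTyp R Θ sΘ f (A :: Γ) B s →
      LTyp R Θ sΘ f Γ (.pi A B) s
  | abs {Γ A b B s} : Trm.IsSort s → LTyp R Θ sΘ f (A :: Γ) b B →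
      LTyp R Θ sΘ f Γ (.pi A B) s → LTyp R Θ sΘ f Γ (.lam A b) (.pi A B)
  | app {Γ t a A B} : LTyp R Θ sΘ f Γ t (.pi A B) → LTyp R Θ sΘ f Γ a A →
      LTyp R Θ sΘ f Γ (.app t a) (Trm.subst1 a B)
  | conv {Γ a A B s} : LTyp R Θ sΘ f Γ a A → Joinable R A B → LTyp R Θ sΘ f Γ B s →
      Trm.IsSort s → LTyp R Θ sΘ f Γ a B
  | symb (g : F) : Prec R Θ f g → Trm.IsSort (sΘ g) → LTyp R Θ sΘ f [] (Θ g) (sΘ g) →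
      LTyp R Θ sΘ f [] (.sym g) (Θ g)

/-- The arguments `y⃗γ = [y₁γ, …, y_jγ]` of an instantiated dependency pair right-hand
side, where `y_j` is de Bruijn variable `0`. -/
def dpArgs {F : Type} (γ : ℕ → Trm F) (j : ℕ) : List (Trm F) :=
  (List.range j).reverse.map γ

/-- The restricted type system `⊢_{f l⃗}` (computability closure): as `Typing`, except that
types are required to be typable using symbols smaller than `f` only, and function symbols
are introduced either as undefined constants or through instances of dependency pairs of
`f l⃗`. -/
inductive RTyp {F : Type} (R : Rules F) (Θ sΘ : F → Trm F) (f : F) (ls : List (Trm F)) :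
    List (Trm F) → Trm F → Trm F → Prop
  | ax : RTyp R Θ sΘ f ls [] .type .kind
  | var {Γ A s} : Trm.IsSort s → LTyp R Θ sΘ f Γ A s →
      RTyp R Θ sΘ f ls (A :: Γ) (.var 0) (Trm.shift A)
  | weak {Γ A s b B} : Trm.IsSort s → LTyp R Θ sΘ f Γ A s → RTyp R Θ sΘ f ls Γ b B →
      RTyp R Θ sΘ f ls (A :: Γ) (Trm.shift b) (Trm.shift B)
  | prod {Γ A B s} : Trm.IsSort s → RTyp R Θ sΘ f ls Γ A .type →
      RTyp R Θ sΘ f ls (A :: Γ) B s → RTyp R Θ sΘ f ls Γ (.pi A B) s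
  | abs {Γ A b B s} : Trm.IsSort s → RTyp R Θ sΘ f ls (A :: Γ) b B →
      LTyp R Θ sΘ f Γ (.pi A B) s → RTyp R Θ sΘ f ls Γ (.lam A b) (.pi A B)
  | app {Γ t a A B s} : Trm.IsSort s → RTyp R Θ sΘ f ls Γ t (.pi A B) →
      RTyp R Θ sΘ f ls Γ a A → LTyp R Θ sΘ f Γ (.pi A B) s →
      RTyp R Θ sΘ f ls Γ (.app t a) (Trm.subst1 a B)
  | conv {Γ a A B s s'} : Trm.IsSort s → Trm.IsSort s' → RTyp R Θ sΘ f ls Γ a A →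
      Joinable R A B → LTyp R Θ sΘ f Γ B s → LTyp R Θ sΘ f Γ A s' →
      RTyp R Θ sΘ f ls Γ a B
  | dp {Γ : List (Trm F)} (g : F) (γ : ℕ → Trm F) (j : ℕ) :
      j ≤ Trm.piArity (Θ g) → Trm.IsSort (sΘ g) → LTyp R Θ sΘ f [] (Θ g) (sΘ g) →
      (∀ i A, (Trm.teleN j (Θ g))[i]? = some A →
        RTyp R Θ sΘ f ls Γ (γ i) (Trm.subst (fun k => γ (k + i + 1)) A)) →
      DepPair R f ls g (dpArgs γ j) →
      RTyp R Θ sΘ f ls Γ (Trm.appList (.sym g) (dpArgs γ j)) (Trm.subst γ (Trm.piCodN j (Θ g)))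
  | const (g : F) : ¬ Defined R g → Trm.IsSort (sΘ g) → LTyp R Θ sΘ f [] (Θ g) (sΘ g) →
      RTyp R Θ sΘ f ls [] (.sym g) (Θ g)

/-- `R` is well-structured (wrt the assignment `Δ` of an environment to every rule):
(a) `≻` is well-founded; (b) `|l⃗| ≤ arit(Θ_f)` for every rule `f l⃗ → r`;
(c) `|m⃗| ≤ arit(Θ_g)` for every dependency pair `f l⃗ > g m⃗`;
(d) `Δ_{f l⃗→r} ⊢_{f l⃗} r : U[x⃗↦l⃗]` for every rule `f l⃗ → r`, where `Θ_f = Πx⃗:T⃗.U`. -/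
def WellStructured {F : Type} (R : Rules F) (Θ sΘ : F → Trm F)
    (Δ : Trm F → Trm F → List (Trm F)) : Prop :=
  WellFounded (fun g f => Prec R Θ f g) ∧
  (∀ l r, (l, r) ∈ R → ∀ (f : F) ls, l = Trm.appList (.sym f) ls →
    ls.length ≤ Trm.piArity (Θ f)) ∧
  (∀ (f : F) ls (g : F) ms, DepPair R f ls g ms → ms.length ≤ Trm.piArity (Θ g)) ∧
  (∀ l r, (l, r) ∈ R → ∀ (f : F) ls, l = Trm.appList (.sym f) ls →
    RTyp R Θ sΘ f ls (Δ l r) r (Trm.subst (mkSubst ls.reverse) (Trm.piCodN ls.length (Θ f))))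

/-- `R` is accessible: for every rule `f l⃗ → r` with `Θ_f = Πx⃗:T⃗.U`, `|x⃗| = |l⃗|`, and
every substitution `σ`, `σ ⊨ Δ_{f l⃗→r}` whenever `⊢ Θ_f : s_f`, `Θ_f ∈ ⟦s_f⟧` and
`[x⃗↦l⃗]σ ⊨ x⃗:T⃗`. -/
def Accessible {F : Type} (R : Rules F) (Θ sΘ : F → Trm F) (I : Interp F)
    (Δ : Trm F → Trm F → List (Trm F)) : Prop :=
  ∀ l r, (l, r) ∈ R → ∀ (f : F) ls, l = Trm.appList (.sym f) ls → ∀ σ : ℕ → Trm F,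
    Typing R Θ sΘ [] (Θ f) (sΘ f) → Θ f ∈ interp R I (sΘ f) Trm.var →
    Models R I (compSubst (mkSubst ls.reverse) σ) (Trm.teleN ls.length (Θ f)) →
    Models R I σ (Δ l r)

/-- A term in `𝕂 ∪ {KIND}`. -/
def IsKindLike {F : Type} (t : Trm F) : Prop := Trm.IsKind t ∨ t = .kind

/-- `R` is plain function-passing (PFP): for every rule `f l⃗ → r` with `Θ_f = Πx⃗:T⃗.U` and
`|x⃗| = |l⃗|`, no `l_i` is a kind or `KIND`, and every `(y : T) ∈ Δ_{f l⃗→r}` satisfies: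
either there is `i` with `y = l_i` and `T = T_i[x⃗↦l⃗]`, or `y ∈ FV(l_i)` and `T = D t⃗`
with `D` undefined and `|t⃗| = arit(Θ_D)`. -/
def PFP {F : Type} (R : Rules F) (Θ : F → Trm F) (Δ : Trm F → Trm F → List (Trm F)) : Prop :=
  ∀ l r, (l, r) ∈ R → ∀ (f : F) ls, l = Trm.appList (.sym f) ls →
    (∀ li ∈ ls, ¬ IsKindLike li) ∧
    (∀ i A, (Δ l r)[i]? = some A →
      (∃ (k : ℕ) (Tk : Trm F), ls[k]? = some (Trm.var i) ∧ (Trm.piDoms (Θ f))[k]? = some Tk ∧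
        Trm.rename (fun j => j + i + 1) A = Trm.subst (mkSubst ((ls.take k).reverse)) Tk) ∨
      ((∃ (k : ℕ) (lk : Trm F), ls[k]? = some lk ∧ i ∈ Trm.FV lk) ∧
        ∃ (D : F) (ts : List (Trm F)), Trm.rename (fun j => j + i + 1) A =
          Trm.appList (.sym D) ts ∧ ¬ Defined R D ∧ ts.length = Trm.piArity (Θ D)))

/-! # Size-change termination -/

/-- Entries of size-change matrices: `−1`, `0` or `∞`. -/
inductive SCTe : Type
  | minusOne : SCTe
  | zero : SCTe
  | infty : SCTe
deriving DecidableEq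

/-- Min-plus multiplication of entries (addition, truncated at `−1`). -/
def SCTe.comp : SCTe → SCTe → SCTe
  | .infty, _ => .infty
  | _, .infty => .infty
  | .minusOne, _ => .minusOne
  | _, .minusOne => .minusOne
  | .zero, .zero => .zero

/-- Minimum of entries (`−1 < 0 < ∞`). -/
def SCTe.min : SCTe → SCTe → SCTe
  | .minusOne, _ => .minusOne
  | _, .minusOne => .minusOne
  | .zero, _ => .zero
  | .infty, x => x

/-- Base of the relation `⊵`: `f t₁…t_n ⊵ t_i` for `f ∈ F`. -/
def ArgSubBase {F : Type} (t u : Trm F) : Prop :=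
  ∃ (f : F) (ts : List (Trm F)), t = Trm.appList (.sym f) ts ∧ u ∈ ts

/-- `⊵`: the smallest transitive relation such that `f t₁…t_n ⊵ t_i` for `f ∈ F`. -/
def ArgGT {F : Type} : Trm F → Trm F → Prop := Relation.TransGen ArgSubBase

open Classical in
/-- The size-change matrix of a dependency pair `f l₁…l_p > g m₁…m_q`:
`a_{ij} = −1` if `l_i ⊵ m_j`, `a_{ij} = 0` if `l_i = m_j`, `a_{ij} = ∞` otherwise
(in particular if `i > p` or `j > q`). -/
noncomputable def dpMatrix {F : Type} (ls ms : List (Trm F)) : ℕ → ℕ → SCTe := fun i j =>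
  match ls[i]?, ms[j]? with
  | some li, some mj =>
      if ArgGT li mj then .minusOne else if li = mj then .zero else .infty
  | _, _ => .infty

/-- Min-plus product of matrices, the middle dimension being `d`. -/
def matComp (d : ℕ) (M N : ℕ → ℕ → SCTe) : ℕ → ℕ → SCTe := fun i j =>
  ((List.range d).map fun k => (M i k).comp (N k j)).foldr SCTe.min .infty

/-- The transitive closure of the call graph of `R`: edges are labeled by the matrices of
the dependency pairs, multiplied in the min-plus semiring along paths. -/
inductive TCEdge {F : Type} (R : Rules F) (Θ : F → Trm F) : F → F → (ℕ → ℕ → SCTe) → Prop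
  | base {f g : F} {ls ms : List (Trm F)} : DepPair R f ls g ms →
      TCEdge R Θ f g (dpMatrix ls ms)
  | comp {f g h : F} {M N : ℕ → ℕ → SCTe} : TCEdge R Θ f g M → TCEdge R Θ g h N →
      TCEdge R Θ f h (matComp (Trm.piArity (Θ g)) M N)

/-- `R` is size-change terminating: in the transitive closure of the call graph, every
idempotent matrix labeling a loop has some `−1` on its diagonal. -/
def SCT {F : Type} (R : Rules F) (Θ : F → Trm F) : Prop :=
  ∀ (f : F) (M : ℕ → ℕ → SCTe), TCEdge R Θ f f M → matComp (Trm.piArity (Θ f)) M M = M →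
    ∃ i < Trm.piArity (Θ f), M i i = SCTe.minusOne

/-! The interpretation is structural on kinds, and on any other term `T` it depends only on `Tσ`. So
on non-kinds it commutes with `γ` as soon as `γ` does not turn them into kinds. Typing ensures this:
`KIND` is not typable and the only type of a kind is `KIND`, hence a well-typed `γ` maps no variable
to a kind or to `KIND`. For the same reason the domain `A` of a typable kind `Πx:A.K` is not a kind,
so that `⟦A⟧γσ = ℐ(Aγσ)`. The assumption `(Πx:A.K)γσ ∈ 𝒟` says that `K[x↦a,γσ] ∈ 𝒟` for all `a` in
this set, which is what an induction on kinds needs. -/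

namespace Trm

variable {F : Type}

/-! ## Substitution calculus -/

theorem upRen_comp_upRen (ρ ρ' : ℕ → ℕ) : upRen ρ' ∘ upRen ρ = upRen (ρ' ∘ ρ) := by
  funext n
  cases n <;> rfl

theorem up_comp_upRen (ρ : ℕ → ℕ) (σ : ℕ → Trm F) : up σ ∘ upRen ρ = up (σ ∘ ρ) := by
  funext n
  cases n <;> rfl

theorem rename_rename (ρ ρ' : ℕ → ℕ) (t : Trm F) :
    rename ρ' (rename ρ t) = rename (ρ' ∘ ρ) t := by
  induction t generalizing ρ ρ' <;> simp_all [rename, upRen_comp_upRen]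

theorem subst_rename (ρ : ℕ → ℕ) (σ : ℕ → Trm F) (t : Trm F) :
    subst σ (rename ρ t) = subst (σ ∘ ρ) t := by
  induction t generalizing ρ σ <;> simp_all [rename, subst, up_comp_upRen]

theorem rename_upRen_comp_up (σ : ℕ → Trm F) (ρ : ℕ → ℕ) :
    rename (upRen ρ) ∘ up σ = up (rename ρ ∘ σ) := by
  funext n
  cases n with
  | zero => rfl
  | succ n =>
    simp only [Function.comp_apply, up, rename_rename]
    rfl

theorem rename_subst (σ : ℕ → Trm F) (ρ : ℕ → ℕ) (t : Trm F) :
    rename ρ (subst σ t) = subst (rename ρ ∘ σ) t := by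
  induction t generalizing σ ρ <;> simp_all [rename, subst, rename_upRen_comp_up]

theorem compSubst_up_up (γ σ : ℕ → Trm F) : compSubst (up γ) (up σ) = up (compSubst γ σ) := by
  funext n
  cases n with
  | zero => rfl
  | succ n =>
    simp only [compSubst, up, subst_rename, rename_subst]
    rfl

theorem subst_subst (γ σ : ℕ → Trm F) (t : Trm F) :
    subst σ (subst γ t) = subst (compSubst γ σ) t := by
  induction t generalizing γ σ with
  | var n => rfl
  | _ => simp_all [subst, compSubst_up_up]

theorem up_var : up (var : ℕ → Trm F) = var := by
  funext n
  cases n <;> rfl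

theorem subst_var (t : Trm F) : subst var t = t := by
  induction t <;> simp_all [subst, up_var]

theorem compSubst_var (γ : ℕ → Trm F) : compSubst γ var = γ :=
  funext fun n => subst_var (γ n)

theorem compSubst_up_scons (a : Trm F) (γ σ : ℕ → Trm F) :
    compSubst (up γ) (scons a σ) = scons a (compSubst γ σ) := by
  funext n
  cases n with
  | zero => rfl
  | succ n => exact subst_rename _ _ _

theorem subst1_subst_up (a : Trm F) (σ : ℕ → Trm F) (t : Trm F) :
    subst1 a (subst (up σ) t) = subst (scons a σ) t := by
  rw [subst1, subst_subst, compSubst_up_scons, compSubst_var]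

theorem subst_appList (σ : ℕ → Trm F) (t : Trm F) (ts : List (Trm F)) :
    subst σ (appList t ts) = appList (subst σ t) (ts.map (subst σ)) := by
  induction ts generalizing t with
  | nil => rfl
  | cons u _ ih => exact ih (.app t u)

theorem appList_ne_kind {t : Trm F} (ht : t ≠ .kind) (ts : List (Trm F)) :
    appList t ts ≠ .kind := by
  induction ts generalizing t with
  | nil => exact ht
  | cons _ _ ih => exact ih nofun

theorem setOf_succ_mem_image_upRen (ρ : ℕ → ℕ) (s : Set ℕ) :
    {n | n + 1 ∈ upRen ρ '' s} = ρ '' {n | n + 1 ∈ s} := by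
  ext n
  constructor
  · rintro ⟨_ | m, hm, hmn⟩
    · cases hmn
    · exact ⟨m, hm, Nat.succ_injective hmn⟩
  · rintro ⟨m, hm, rfl⟩
    exact ⟨m + 1, hm, rfl⟩

theorem FV_rename (ρ : ℕ → ℕ) (t : Trm F) : FV (rename ρ t) = ρ '' FV t := by
  induction t generalizing ρ with
  | pi A B ihA ihB | lam A B ihA ihB =>
    simp only [rename, FV, ihA, ihB, setOf_succ_mem_image_upRen, Set.image_union]
  | app t u iht ihu => simp only [rename, FV, iht, ihu, Set.image_union]
  | _ => simp [rename, FV]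

/-! ## Kinds and substitution -/

theorem isKind_rename_iff {ρ : ℕ → ℕ} {t : Trm F} : IsKind (rename ρ t) ↔ IsKind t := by
  induction t generalizing ρ with
  | pi _ _ _ ihB => exact ihB
  | _ => rfl

theorem rename_eq_kind_iff {ρ : ℕ → ℕ} {t : Trm F} : rename ρ t = .kind ↔ t = .kind := by
  cases t <;> simp [rename]

theorem isKindLike_rename_iff {ρ : ℕ → ℕ} {t : Trm F} :
    IsKindLike (rename ρ t) ↔ IsKindLike t :=
  or_congr isKind_rename_iff rename_eq_kind_iff

/-- `γ` maps no variable of `s` to a kind or to `KIND`. Such substitutions preserve the distinction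
between kinds and other terms, on which the interpretation is defined by cases. -/
def KindFreeOn (γ : ℕ → Trm F) (s : Set ℕ) : Prop :=
  ∀ i ∈ s, ¬ IsKindLike (γ i)

theorem KindFreeOn.mono {γ : ℕ → Trm F} {s s' : Set ℕ} (hγ : KindFreeOn γ s') (h : s ⊆ s') :
    KindFreeOn γ s :=
  fun i hi => hγ i (h hi)

theorem KindFreeOn.up {γ : ℕ → Trm F} {s : Set ℕ} (hγ : KindFreeOn γ {n | n + 1 ∈ s}) :
    KindFreeOn (up γ) s := by
  rintro (_ | n) hn
  · simp [Trm.up, IsKindLike, IsKind]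
  · exact fun h => hγ n hn (isKindLike_rename_iff.1 h)

theorem IsKind.subst {t : Trm F} (ht : IsKind t) (γ : ℕ → Trm F) : IsKind (subst γ t) := by
  induction t generalizing γ with
  | type => trivial
  | pi _ _ _ ihB => exact ihB ht _
  | _ => exact ht.elim

theorem KindFreeOn.isKind_of_subst {γ : ℕ → Trm F} {t : Trm F} (hγ : KindFreeOn γ (FV t))
    (ht : IsKind (subst γ t)) : IsKind t := by
  induction t generalizing γ with
  | pi _ _ _ ihB => exact ihB (hγ.mono Set.subset_union_right).up ht
  | var n => exact (hγ n rfl (.inl ht)).elim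
  | _ => exact ht

theorem eq_kind_of_subst_eq_kind {γ : ℕ → Trm F} {t : Trm F} (hγ : ∀ i ∈ FV t, γ i ≠ .kind)
    (ht : subst γ t = .kind) : t = .kind := by
  cases t with
  | var n => exact (hγ n rfl ht).elim
  | kind => rfl
  | _ => cases ht

theorem KindFreeOn.isKindLike_of_subst {γ : ℕ → Trm F} {t : Trm F} (hγ : KindFreeOn γ (FV t)) :
    IsKindLike (subst γ t) → IsKindLike t :=
  Or.imp hγ.isKind_of_subst (eq_kind_of_subst_eq_kind fun i hi h => hγ i hi (.inr h))

/-- The kinds `Πx₁:T₁.…Πxₙ:Tₙ.TYPE` whose domains `Tᵢ` are themselves neither kinds nor `KIND`.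
All typable kinds are of this form, whereas `IsKind` leaves the domains unconstrained. -/
inductive IsProperKind : Trm F → Prop
  | type : IsProperKind .type
  | pi {A B : Trm F} : ¬ IsKindLike A → IsProperKind B → IsProperKind (.pi A B)

theorem IsProperKind.isKind {K : Trm F} (hK : IsProperKind K) : IsKind K := by
  induction hK with
  | type => trivial
  | pi _ _ ih => exact ih

theorem IsProperKind.rename {K : Trm F} (hK : IsProperKind K) (ρ : ℕ → ℕ) :
    IsProperKind (rename ρ K) := by
  induction hK generalizing ρ with
  | type => exact .type
  | pi hA _ ih => exact .pi (fun h => hA (isKindLike_rename_iff.1 h)) (ih _)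

end Trm

/-! ## Typing of kinds -/

section Typing

variable {F : Type} {R : Rules F} {Θ sΘ : F → Trm F} {Γ Δ : List (Trm F)} {t u A T : Trm F}
  {γ : ℕ → Trm F}

theorem IsRewriteSystem.normalForm_kind (hRS : IsRewriteSystem R) : NormalForm R .kind := by
  intro u h
  generalize hk : (Trm.kind : Trm F) = k at h
  cases h with
  | @rule l r σ hlr =>
    obtain ⟨-, f, ls, rfl : l = _⟩ := hRS _ hlr
    rw [Trm.subst_appList] at hk
    exact Trm.appList_ne_kind (t := .sym f) nofun _ hk.symm
  | _ => cases hk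

theorem NormalForm.eq_of_redStar (ht : NormalForm R t) (h : RedStar R t u) : t = u :=
  h.cases_head.resolve_right fun ⟨v, hv, _⟩ => ht v hv

theorem PresTyping.redStar (hpres : PresTyping R Θ sΘ) (ht : Typing R Θ sΘ Γ t T)
    (h : RedStar R t u) : Typing R Θ sΘ Γ u T := by
  induction h with
  | refl => exact ht
  | tail _ hstep ih => exact hpres _ _ _ _ ih hstep

namespace Typing

theorem ne_kind (h : Typing R Θ sΘ Γ t T) : t ≠ .kind := by
  induction h with
  | weak _ _ _ _ ih => exact fun h => ih (Trm.rename_eq_kind_iff.1 h)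
  | conv _ _ _ _ ih _ => exact ih
  | _ => exact nofun

theorem not_joinable_kind (hkind : NormalForm R .kind) (hpres : PresTyping R Θ sΘ)
    (h : Typing R Θ sΘ Γ t T) : ¬ Joinable R .kind t := by
  rintro ⟨v, hv, htv⟩
  obtain rfl := hkind.eq_of_redStar hv
  exact (hpres.redStar h htv).ne_kind rfl

theorem eq_kind_of_isKind (hkind : NormalForm R .kind) (hpres : PresTyping R Θ sΘ)
    (h : Typing R Θ sΘ Γ t T) (ht : t.IsKind) : T = .kind := by
  induction h with
  | ax => rfl
  | weak _ _ _ _ ih => exact Trm.rename_eq_kind_iff.2 (ih (Trm.isKind_rename_iff.1 ht))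
  | prod _ _ _ _ ih => exact ih ht
  | conv _ hAB hB _ ih _ =>
    obtain rfl := ih ht
    exact (hB.not_joinable_kind hkind hpres hAB).elim
  | _ => exact ht.elim

theorem isProperKind (hkind : NormalForm R .kind) (hpres : PresTyping R Θ sΘ)
    (h : Typing R Θ sΘ Γ t T) (ht : t.IsKind) : t.IsProperKind := by
  induction h with
  | ax => exact .type
  | weak _ _ _ _ ih => exact (ih (Trm.isKind_rename_iff.1 ht)).rename _
  | prod _ hA _ _ ihB =>
    refine .pi ?_ (ihB ht)
    rintro (hA' | hA')
    · cases hA.eq_kind_of_isKind hkind hpres hA'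
    · exact hA.ne_kind hA'
  | conv _ _ _ _ ih _ => exact ih ht
  | _ => exact ht.elim

theorem FV_subset_Iio_length (h : Typing R Θ sΘ Γ t T) : t.FV ⊆ Set.Iio Γ.length := by
  induction h with
  | ax | symb => exact Set.empty_subset _
  | var => exact Set.singleton_subset_iff.2 (Nat.succ_pos _)
  | weak _ _ _ _ ih =>
    rw [Trm.shift, Trm.FV_rename]
    rintro _ ⟨i, hi, rfl⟩
    exact Nat.succ_lt_succ (ih hi)
  | prod _ _ _ ihA ihB => exact Set.union_subset ihA fun i hi => Nat.lt_of_succ_lt_succ (ihB hi)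
  | abs _ _ _ ihb ihAB =>
    exact Set.union_subset (Set.subset_union_left.trans ihAB)
      fun i hi => Nat.lt_of_succ_lt_succ (ihb hi)
  | app _ _ iht iha => exact Set.union_subset iht iha
  | conv _ _ _ _ ih _ => exact ih

theorem exists_typing_head (h : Typing R Θ sΘ (A :: Γ) t T) : ∃ s, Typing R Θ sΘ Γ A s := by
  generalize hΔ : A :: Γ = Δ at h
  induction h with
  | ax | symb => cases hΔ
  | var _ hA _ | weak _ hA _ _ _ =>
    cases hΔ
    exact ⟨_, hA⟩
  | prod _ _ _ ih _ | abs _ _ _ _ ih | app _ _ ih _ | conv _ _ _ _ ih _ => exact ih hΔ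

theorem exists_typing_getElem (h : Typing R Θ sΘ Γ t T) {i : ℕ} (hi : i < Γ.length) :
    ∃ s, Typing R Θ sΘ (Γ.drop (i + 1)) Γ[i] s := by
  induction Γ generalizing i t T with
  | nil => cases hi
  | cons A Γ ih =>
    obtain ⟨s, hA⟩ := h.exists_typing_head
    cases i with
    | zero => exact ⟨s, hA⟩
    | succ i => exact ih hA (Nat.lt_of_succ_lt_succ hi)

end Typing

theorem SubstTyped.ne_kind (hγ : SubstTyped (Typing R Θ sΘ) Γ γ Δ) {i : ℕ} (hi : i < Δ.length) :
    γ i ≠ .kind :=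
  (hγ i _ (List.getElem?_eq_getElem hi)).ne_kind

theorem SubstTyped.kindFreeOn (hkind : NormalForm R .kind) (hpres : PresTyping R Θ sΘ)
    (hγ : SubstTyped (Typing R Θ sΘ) Γ γ Δ) (hΔ : Typing R Θ sΘ Δ t T) :
    Trm.KindFreeOn γ (Set.Iio Δ.length) := by
  rintro i hi (hk | hk)
  · obtain ⟨s, hA⟩ := hΔ.exists_typing_getElem hi
    have hAγ := (hγ i _ (List.getElem?_eq_getElem hi)).eq_kind_of_isKind hkind hpres hk
    refine hA.ne_kind (Trm.eq_kind_of_subst_eq_kind (fun j hj => hγ.ne_kind ?_) hAγ)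
    have hj : j < (Δ.drop (i + 1)).length := hA.FV_subset_Iio_length hj
    rw [List.length_drop] at hj
    omega
  · exact hγ.ne_kind hi hk

end Typing

/-! ## Interpretation and substitution -/

section Interpretation

variable {F : Type} {R : Rules F} {I : Interp F} {A B K T U a : Trm F} {γ σ : ℕ → Trm F}

open Classical in
theorem interp_of_not_isKindLike (hT : ¬ IsKindLike T) (σ : ℕ → Trm F) :
    interp R I T σ = if T.subst σ ∈ domD R I then partMem I (T.subst σ) else SNset R := by
  cases T with
  | type => exact (hT (.inl trivial)).elim
  | kind => exact (hT (.inr rfl)).elim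
  | pi A B =>
    have hB : ¬ B.IsKind := fun hB => hT (.inl hB)
    rw [interp, if_neg hB]
  | _ => rw [interp]

theorem interp_pi_of_isKind (hB : B.IsKind) (A : Trm F) (σ : ℕ → Trm F) :
    interp R I (.pi A B) σ =
      {t | ∀ a ∈ interp R I A σ, Trm.app t a ∈ interp R I B (Trm.scons a σ)} := by
  rw [interp, if_pos hB]

theorem interp_subst_of_not_isKindLike (hU : ¬ IsKindLike U) (hγ : Trm.KindFreeOn γ U.FV) :
    interp R I (U.subst γ) σ = interp R I U (compSubst γ σ) := by
  rw [interp_of_not_isKindLike hU, interp_of_not_isKindLike (mt hγ.isKindLike_of_subst hU),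
    Trm.subst_subst]

theorem mem_domD_of_pi_mem_domD (hI : PFun.Dom I ⊆ domD R I) (h : .pi A B ∈ domD R I) :
    A ∈ domD R I :=
  hI (h.2 A B .refl).1

theorem subst1_mem_domD_of_pi_mem_domD (hI : PFun.Dom I ⊆ domD R I) (h : .pi A B ∈ domD R I)
    (ha : a ∈ partMem I A) : Trm.subst1 a B ∈ domD R I :=
  have ⟨hA, hB⟩ := h.2 A B .refl
  hI (hB _ (Part.get_mem hA) a (ha _ (Part.get_mem hA)))

theorem Trm.IsProperKind.interp_subst (hI : PFun.Dom I ⊆ domD R I) (hK : K.IsProperKind)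
    (hγ : Trm.KindFreeOn γ K.FV) (hdom : (K.subst γ).subst σ ∈ domD R I) :
    interp R I (K.subst γ) σ = interp R I K (compSubst γ σ) := by
  induction hK generalizing γ σ with
  | type => rfl
  | @pi A B hA hB ihB =>
    have hγB : KindFreeOn (up γ) B.FV := (hγ.mono Set.subset_union_right).up
    have interp_A : interp R I (A.subst γ) σ = interp R I A (compSubst γ σ) :=
      interp_subst_of_not_isKindLike hA (hγ.mono Set.subset_union_left)
    have interp_A_eq_partMem :
        interp R I A (compSubst γ σ) = partMem I ((A.subst γ).subst σ) := by
      rw [interp_of_not_isKindLike hA, ← subst_subst, if_pos (mem_domD_of_pi_mem_domD hI hdom)]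
    have interp_B (a : Trm F) (ha : a ∈ interp R I A (compSubst γ σ)) :
        interp R I (B.subst (up γ)) (scons a σ) =
          interp R I B (scons a (compSubst γ σ)) := by
      rw [← compSubst_up_scons]
      refine ihB hγB ?_
      rw [← subst1_subst_up]
      exact subst1_mem_domD_of_pi_mem_domD hI hdom (interp_A_eq_partMem ▸ ha)
    rw [subst, interp_pi_of_isKind (hB.isKind.subst _), interp_pi_of_isKind hB.isKind, interp_A]
    exact Set.ext fun t => forall₂_congr fun a ha => by rw [interp_B a ha]

theorem interp_subst_general {Θ sΘ : F → Trm F} {Γ Δ : List (Trm F)} (hkind : NormalForm R .kind)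
    (hpres : PresTyping R Θ sΘ) (hI : PFun.Dom I = domD R I) (hU : Typing R Θ sΘ Δ U T)
    (hγ : SubstTyped (Typing R Θ sΘ) Γ γ Δ) (hdom : (U.subst γ).subst σ ∈ domD R I) :
    interp R I (U.subst γ) σ = interp R I U (compSubst γ σ) := by
  have hγU : Trm.KindFreeOn γ U.FV := (hγ.kindFreeOn hkind hpres hU).mono hU.FV_subset_Iio_length
  by_cases hUkind : U.IsKind
  · exact (hU.isProperKind hkind hpres hUkind).interp_subst hI.subset hγU hdom
  · exact interp_subst_of_not_isKindLike (not_or.2 ⟨hUkind, hU.ne_kind⟩) hγU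

end Interpretation

/-- Lemma 4(e) of the paper. If `Δ ⊢ U : s`, `Γ ⊢ γ : Δ` and
`Uγσ ∈ 𝒟`, then `⟦Uγ⟧σ = ⟦U⟧(γσ)`. -/
theorem interp_subst {F : Type} (R : Rules F) (Θ sΘ : F → Trm F)
    (hRS : IsRewriteSystem R)
    (hconf : LocallyConfluent R)
    (hpres : PresTyping R Θ sΘ)
    (calI : Interp F) (hlfp : IsLfpInterp (interpF R) calI)
    (Δ Γ : List (Trm F)) (U s : Trm F) (γ σ : ℕ → Trm F)
    (hs : Trm.IsSort s)
    (hU : Typing R Θ sΘ Δ U s)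
    (hγ : SubstTyped (Typing R Θ sΘ) Γ γ Δ)
    (hdom : Trm.subst σ (Trm.subst γ U) ∈ domD R calI) :
    interp R calI (Trm.subst γ U) σ = interp R calI U (compSubst γ σ) :=
  interp_subst_general hRS.normalForm_kind hpres (congrArg PFun.Dom hlfp.1.symm) hU hγ hdom
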